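/- Let A = (A_1,…,A_n) be a nonnegative vector in ℝ^n, D = n + A_1 + ⋯ + A_n, and α > 0. Let f : ℝ^n → ℝ be measurable with ∫_{ℝ^n_A} |f| x^A dx = 1 and ∫_{ℝ^n_A} |f| |x|^α x^A dx < ∞, and assume |f| log|f| is integrable on ℝ^n_A with respect to x^A dx. Then −∫_{ℝ^n_A} |f| log|f| x^A dx ≤ (D/α) · log( (α C_A(α) e / D) ∫_{ℝ^n_A} |f| |x|^α x^A dx ), where C_A(α) = ( (Γ(D/α + 1)/Γ(D/2 + 1)) · Π(A)^{D/2} )^{α/D}. -/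

import Mathlib

open MeasureTheory Real Filter

noncomputable section

/-- The positivity region `ℝ^n_A = {x : x_i > 0 whenever A_i > 0}`. -/
def monSet {ι : Type*} [Fintype ι] (A : ι → ℝ) : Set (EuclideanSpace ℝ ι) :=
  {x | ∀ i, 0 < A i → 0 < x i}

/-- The monomial weight `x^A = ∏ |x_i|^{A_i}`. -/
def monWeight {ι : Type*} [Fintype ι] (A : ι → ℝ) (x : EuclideanSpace ℝ ι) : ℝ :=
  ∏ i, |x i| ^ A i

/-- The homogeneous dimension `D = n + A_1 + ⋯ + A_n`. -/
def monDim {ι : Type*} [Fintype ι] (A : ι → ℝ) : ℝ :=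
  (Fintype.card ι : ℝ) + ∑ i, A i

/-- `k = #{i : A_i > 0}`. -/
def monK {ι : Type*} [Fintype ι] (A : ι → ℝ) : ℕ :=
  Nat.card {i : ι // 0 < A i}

/-- `Π(A) = [ (∏ Γ((A_i+1)/2)) / 2^k ]^{2/D}`. -/
def monPi {ι : Type*} [Fintype ι] (A : ι → ℝ) : ℝ :=
  ((∏ i, Gamma ((A i + 1) / 2)) / 2 ^ monK A) ^ (2 / monDim A)

/-- The constant `C_A(α) = ( (Γ(D/α+1)/Γ(D/2+1)) Π(A)^{D/2} )^{α/D}`. -/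
def monCA {ι : Type*} [Fintype ι] (A : ι → ℝ) (α : ℝ) : ℝ :=
  (Gamma (monDim A / α + 1) / Gamma (monDim A / 2 + 1) * monPi A ^ (monDim A / 2)) ^
    (α / monDim A)

/-!
Call a measure `D`-homogeneous if `μ (B_t) = t ^ D * μ (B_1)` for balls about the origin. Then `‖x‖`
has law `μ (B_1) * D * r ^ (D - 1) dr`, so that
`∫ exp (-s ‖x‖ ^ p) dμ = s ^ (-D / p) * Γ (D / p + 1) * μ (B_1)`.
Gibbs' inequality with the potential `s ‖x‖ ^ p` bounds the entropy of a probability density by `s`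
times its `p`-th moment plus the logarithm of this integral, and the best choice of `s` gives
Shannon's inequality with a constant depending only on `D`, `p` and `μ (B_1)`.

The measure `x^A dx` on `ℝ^n_A` is homogeneous by scaling. Its value of `μ (B_1)` comes from the
case `p = 2`, `s = 1` of the integral above, which factors into one-dimensional Gamma integrals.
-/

section Gibbs

theorem sub_le_mul_log_sub_mul_log {a b : ℝ} (ha : 0 ≤ a) (hb : 0 < b) :
    a - b ≤ a * log a - a * log b := by
  rcases ha.eq_or_lt with rfl | ha
  · simpa using hb.le
  · calc a - b = b * (a / b - 1) := by field_simp
      _ ≤ b * (a / b * log (a / b)) :=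
        mul_le_mul_of_nonneg_left (self_sub_one_le_mul_log (by positivity)) hb.le
      _ = a * log a - a * log b := by rw [log_div ha.ne' hb.ne']; field_simp

variable {X : Type*} [MeasurableSpace X] {μ : Measure X} {φ ψ u : X → ℝ}

theorem neg_integral_mul_log_self_le (hφ : ∀ x, 0 ≤ φ x) (hψ : ∀ x, 0 < ψ x)
    (hφi : Integrable φ μ) (hψi : Integrable ψ μ)
    (hmass : ∫ x, ψ x ∂μ ≤ ∫ x, φ x ∂μ)
    (hent : Integrable (fun x => φ x * log (φ x)) μ)
    (hcross : Integrable (fun x => φ x * log (ψ x)) μ) :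
    -∫ x, φ x * log (φ x) ∂μ ≤ -∫ x, φ x * log (ψ x) ∂μ := by
  have h := integral_mono (hφi.sub hψi) (hent.sub hcross)
    fun x => sub_le_mul_log_sub_mul_log (hφ x) (hψ x)
  rw [integral_sub' hφi hψi, integral_sub' hent hcross] at h
  linarith

theorem neg_integral_mul_log_self_le_integral_add_log
    (hφ : ∀ x, 0 ≤ φ x) (hnorm : ∫ x, φ x ∂μ = 1)
    (hent : Integrable (fun x => φ x * log (φ x)) μ) (hu : Integrable (fun x => φ x * u x) μ)
    (hexp : Integrable (fun x => exp (-u x)) μ) :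
    -∫ x, φ x * log (φ x) ∂μ ≤ ∫ x, φ x * u x ∂μ + log (∫ x, exp (-u x) ∂μ) := by
  have : NeZero μ := ⟨by rintro rfl; simp at hnorm⟩
  have hZ : 0 < ∫ x, exp (-u x) ∂μ := integral_exp_pos hexp
  set Z := ∫ x, exp (-u x) ∂μ with hZdef
  have hφi : Integrable φ μ := .of_integral_ne_zero (by simp [hnorm])
  have hmass : ∫ x, exp (-u x) / Z ∂μ = 1 := by rw [integral_div, ← hZdef, div_self hZ.ne']
  have hlog : (fun x => φ x * log (exp (-u x) / Z)) = fun x => -(φ x * u x + log Z * φ x) := by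
    funext x
    rw [log_div (exp_ne_zero _) hZ.ne', log_exp]
    ring
  have hcross : Integrable (fun x => φ x * log (exp (-u x) / Z)) μ :=
    hlog ▸ (hu.add (hφi.const_mul (log Z))).neg
  calc -∫ x, φ x * log (φ x) ∂μ
      ≤ -∫ x, φ x * log (exp (-u x) / Z) ∂μ :=
        neg_integral_mul_log_self_le hφ (fun x => by positivity) hφi (hexp.div_const Z)
          (hmass.trans hnorm.symm).le hent hcross
    _ = ∫ x, φ x * u x ∂μ + log Z := by
        rw [hlog, integral_neg, neg_neg, integral_add hu (hφi.const_mul (log Z)),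
          integral_const_mul, hnorm, mul_one]

end Gibbs

section RealCalculus

theorem lintegral_Ioo_mul_rpow_sub_one {D : ℝ} (hD : 0 < D) {t : ℝ} (ht : 0 < t) :
    ∫⁻ r in Set.Ioo 0 t, ENNReal.ofReal (D * r ^ (D - 1)) = ENNReal.ofReal (t ^ D) := by
  have hint : IntegrableOn (fun r => D * r ^ (D - 1)) (Set.Ioc 0 t) :=
    ((intervalIntegral.intervalIntegrable_rpow' (by linarith)).const_mul D).1
  rw [restrict_Ioo_eq_restrict_Ioc, ← ofReal_integral_eq_lintegral_ofReal hint
      (ae_restrict_of_forall_mem measurableSet_Ioc fun r hr =>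
        mul_nonneg hD.le (rpow_nonneg hr.1.le _)),
    ← intervalIntegral.integral_of_le ht.le, intervalIntegral.integral_const_mul,
    integral_rpow (Or.inl (by linarith)), sub_add_cancel, zero_rpow hD.ne', sub_zero,
    mul_div_cancel₀ _ hD.ne']

theorem div_mul_add_log_rpow_mul {D p K M : ℝ} (hD : 0 < D) (hp : 0 < p) (hK : 0 < K)
    (hM : 0 < M) :
    D / (p * M) * M + log ((D / (p * M)) ^ (-(D / p)) * K) =
      D / p * log (p * K ^ (p / D) * exp 1 / D * M) := by
  set s := D / (p * M) with hs
  have hs0 : 0 < s := by positivity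
  have hsM : s * M = D / p := by rw [hs]; field_simp
  have harg : p * K ^ (p / D) * exp 1 / D * M = s⁻¹ * K ^ (p / D) * exp 1 := by
    rw [hs]; field_simp
  rw [harg, hsM, log_mul (by positivity) hK.ne', log_mul (by positivity) (exp_ne_zero 1),
    log_mul (by positivity) (by positivity), log_rpow hs0, log_rpow hK, log_inv, log_exp]
  field_simp
  ring

end RealCalculus

section HomogeneousBalls

variable {E : Type*} [NormedAddCommGroup E] [MeasurableSpace E] {μ : Measure E} {D : ℝ}

/-- The measure `μ` has homogeneous dimension `D` at the origin: the unit ball has finite mass, and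
the ball of radius `t` has `t ^ D` times that mass. -/
structure HasHomogeneousBalls (μ : Measure E) (D : ℝ) : Prop where
  unitBall_ne_top : μ (Metric.ball 0 1) ≠ ⊤
  measure_ball : ∀ t, 0 < t →
    μ (Metric.ball 0 t) = ENNReal.ofReal (t ^ D) * μ (Metric.ball 0 1)

namespace HasHomogeneousBalls

variable [OpensMeasurableSpace E]

theorem map_norm_eq (hμ : HasHomogeneousBalls μ D) (hD : 0 < D) :
    μ.map norm = μ (Metric.ball 0 1) •
      (volume.restrict (Set.Ioi 0)).withDensity fun r => ENNReal.ofReal (D * r ^ (D - 1)) := by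
  have hball (t : ℝ) : μ.map norm (Set.Iio t) = μ (Metric.ball 0 t) := by
    rw [Measure.map_apply measurable_norm measurableSet_Iio]
    congr 1
    ext
    simp
  refine Measure.ext_of_generateFrom_of_iUnion (Set.range Set.Iio)
    (fun n : ℕ => Set.Iio (n + 1 : ℝ)) (borel_eq_generateFrom_Iio ℝ ▸ BorelSpace.measurable_eq)
    isPiSystem_Iio (Set.iUnion_eq_univ_iff.2 fun t => ?_) (fun n => ⟨_, rfl⟩) (fun n => ?_) ?_
  · obtain ⟨n, hn⟩ := exists_nat_gt t
    exact ⟨n, hn.trans (lt_add_one _)⟩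
  · rw [hball, hμ.measure_ball _ n.cast_add_one_pos]
    exact ENNReal.mul_ne_top ENNReal.ofReal_ne_top hμ.unitBall_ne_top
  · rintro _ ⟨t, rfl⟩
    rw [hball, Measure.smul_apply, withDensity_apply _ measurableSet_Iio,
      Measure.restrict_restrict measurableSet_Iio, Set.Iio_inter_Ioi, smul_eq_mul, mul_comm]
    rcases le_or_gt t 0 with ht | ht
    · simp [Metric.ball_eq_empty.2 ht, Set.Ioo_eq_empty_of_le ht]
    · rw [lintegral_Ioo_mul_rpow_sub_one hD ht, hμ.measure_ball t ht]

theorem integral_comp_norm (hμ : HasHomogeneousBalls μ D) (hD : 0 < D) {F : Type*}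
    [NormedAddCommGroup F] [NormedSpace ℝ F] {g : ℝ → F} (hg : StronglyMeasurable g) :
    ∫ x, g ‖x‖ ∂μ =
      μ.real (Metric.ball 0 1) • ∫ r in Set.Ioi 0, (D * r ^ (D - 1)) • g r := by
  rw [← integral_map measurable_norm.aemeasurable hg.aestronglyMeasurable, hμ.map_norm_eq hD,
    integral_smul_measure, integral_withDensity_eq_integral_toReal_smul (by fun_prop) (by simp)]
  congr 1
  refine setIntegral_congr_fun measurableSet_Ioi fun r (hr : 0 < r) => ?_
  simp only [ENNReal.toReal_ofReal (show 0 ≤ D * r ^ (D - 1) by positivity)]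

theorem integral_exp_neg_mul_norm_rpow (hμ : HasHomogeneousBalls μ D) (hD : 0 < D) {p s : ℝ}
    (hp : 0 < p) (hs : 0 < s) :
    ∫ x, exp (-(s * ‖x‖ ^ p)) ∂μ =
      s ^ (-(D / p)) * (Gamma (D / p + 1) * μ.real (Metric.ball 0 1)) := by
  rw [hμ.integral_comp_norm hD (g := fun r => exp (-(s * r ^ p)))
    (Measurable.stronglyMeasurable (by fun_prop))]
  simp only [smul_eq_mul, ← neg_mul, mul_assoc]
  rw [integral_const_mul, integral_rpow_mul_exp_neg_mul_rpow hp (by linarith) hs, sub_add_cancel,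
    Gamma_add_one (by positivity), neg_div]
  ring

theorem ae_norm_pos (hμ : HasHomogeneousBalls μ D) (hD : 0 < D) : ∀ᵐ x ∂μ, 0 < ‖x‖ := by
  refine ae_of_ae_map (p := fun r => 0 < r) measurable_norm.aemeasurable ?_
  rw [hμ.map_norm_eq hD]
  exact Measure.ae_smul_measure
    ((withDensity_absolutelyContinuous _ _).ae_le (ae_restrict_mem measurableSet_Ioi)) _

theorem unitBall_real_pos [NeZero μ] (hμ : HasHomogeneousBalls μ D) (hD : 0 < D) :
    0 < μ.real (Metric.ball 0 1) := by
  refine ENNReal.toReal_pos (fun h => NeZero.ne μ ?_) hμ.unitBall_ne_top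
  rw [← Measure.map_eq_zero_iff measurable_norm.aemeasurable, hμ.map_norm_eq hD, h, zero_smul]

variable {φ : E → ℝ} {p : ℝ}

theorem integral_mul_norm_rpow_pos (hμ : HasHomogeneousBalls μ D) (hD : 0 < D)
    (hφ : ∀ x, 0 ≤ φ x) (hφ0 : ∫ x, φ x ∂μ ≠ 0) (hmom : Integrable (fun x => φ x * ‖x‖ ^ p) μ) :
    0 < ∫ x, φ x * ‖x‖ ^ p ∂μ := by
  have hnonneg : ∀ x, 0 ≤ φ x * ‖x‖ ^ p := fun x => mul_nonneg (hφ x) (by positivity)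
  refine (integral_nonneg hnonneg).lt_of_ne' fun hzero => hφ0 (integral_eq_zero_of_ae ?_)
  filter_upwards [(integral_eq_zero_iff_of_nonneg hnonneg hmom).1 hzero, hμ.ae_norm_pos hD]
    with x hx hpos
  exact (mul_eq_zero.1 hx).resolve_right (rpow_pos_of_pos hpos p).ne'

theorem neg_integral_mul_log_self_le_add_log (hμ : HasHomogeneousBalls μ D) (hD : 0 < D)
    (hp : 0 < p) (hφ : ∀ x, 0 ≤ φ x) (hnorm : ∫ x, φ x ∂μ = 1)
    (hmom : Integrable (fun x => φ x * ‖x‖ ^ p) μ)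
    (hent : Integrable (fun x => φ x * log (φ x)) μ) {s : ℝ} (hs : 0 < s) :
    -∫ x, φ x * log (φ x) ∂μ ≤ s * ∫ x, φ x * ‖x‖ ^ p ∂μ +
      log (s ^ (-(D / p)) * (Gamma (D / p + 1) * μ.real (Metric.ball 0 1))) := by
  have : NeZero μ := ⟨by rintro rfl; simp at hnorm⟩
  have hball := hμ.unitBall_real_pos hD
  have hZ := hμ.integral_exp_neg_mul_norm_rpow hD hp hs
  have hexp : Integrable (fun x => exp (-(s * ‖x‖ ^ p))) μ :=
    .of_integral_ne_zero (hZ.trans_ne (by positivity))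
  have hu : (fun x => φ x * (s * ‖x‖ ^ p)) = fun x => s * (φ x * ‖x‖ ^ p) := by
    funext x
    ring
  have hgibbs := neg_integral_mul_log_self_le_integral_add_log hφ hnorm hent
    (hu ▸ hmom.const_mul s) hexp
  rwa [hu, integral_const_mul, hZ] at hgibbs

theorem neg_integral_mul_log_self_le (hμ : HasHomogeneousBalls μ D) (hD : 0 < D) (hp : 0 < p)
    (hφ : ∀ x, 0 ≤ φ x) (hnorm : ∫ x, φ x ∂μ = 1)
    (hmom : Integrable (fun x => φ x * ‖x‖ ^ p) μ)
    (hent : Integrable (fun x => φ x * log (φ x)) μ) :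
    -∫ x, φ x * log (φ x) ∂μ ≤
      D / p * log (p * (Gamma (D / p + 1) * μ.real (Metric.ball 0 1)) ^ (p / D) * exp 1 / D *
        ∫ x, φ x * ‖x‖ ^ p ∂μ) := by
  have : NeZero μ := ⟨by rintro rfl; simp at hnorm⟩
  have hK : 0 < Gamma (D / p + 1) * μ.real (Metric.ball 0 1) := by
    have hball := hμ.unitBall_real_pos hD
    positivity
  have hM : 0 < ∫ x, φ x * ‖x‖ ^ p ∂μ :=
    hμ.integral_mul_norm_rpow_pos hD hφ (by simp [hnorm]) hmom
  -- The bound at rate `s` is smallest at `s = D / (p * M)`, `M` being the `p`-th moment.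
  rw [← div_mul_add_log_rpow_mul hD hp hK hM]
  exact hμ.neg_integral_mul_log_self_le_add_log hD hp hφ hnorm hmom hent (by positivity)

end HasHomogeneousBalls

end HomogeneousBalls

section Homogeneity

open scoped Pointwise

theorem withDensity_smul_set_of_homogeneous {E : Type*} [NormedAddCommGroup E] [NormedSpace ℝ E]
    [FiniteDimensional ℝ E] [MeasurableSpace E] [BorelSpace E] (μ : Measure E)
    [μ.IsAddHaarMeasure] {w : E → ENNReal} (hw : Measurable w) {t : ℝ} (ht : 0 < t) {c : ENNReal}
    (hwt : ∀ x, w (t • x) = c * w x) {s : Set E} (hs : MeasurableSet s) :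
    μ.withDensity w (t • s) =
      ENNReal.ofReal (t ^ Module.finrank ℝ E) * c * μ.withDensity w s := by
  have hts : MeasurableSet (t • s) := hs.const_smul₀ t
  have hscale : c * ∫⁻ x in s, w x ∂μ =
      ENNReal.ofReal (t ^ Module.finrank ℝ E)⁻¹ * ∫⁻ x in t • s, w x ∂μ := by
    calc c * ∫⁻ x in s, w x ∂μ = ∫⁻ x in (t • ·) ⁻¹' (t • s), w (t • x) ∂μ := by
          simp only [hwt]
          rw [lintegral_const_mul c hw, Set.preimage_smul₀ ht.ne', inv_smul_smul₀ ht.ne']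
      _ = ∫⁻ x in t • s, w x ∂(μ.map (t • ·)) :=
          (setLIntegral_map hts hw (measurable_const_smul t)).symm
      _ = _ := by
          rw [Measure.map_addHaar_smul μ ht.ne', Measure.restrict_smul, lintegral_smul_measure,
            abs_of_pos (by positivity), smul_eq_mul]
  rw [withDensity_apply _ hts, withDensity_apply _ hs, mul_assoc, hscale, ← mul_assoc,
    ← ENNReal.ofReal_mul (by positivity), mul_inv_cancel₀ (by positivity), ENNReal.ofReal_one,
    one_mul]

end Homogeneity

section MonomialMeasure

variable {ι : Type*} [Fintype ι] {A : ι → ℝ}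

theorem measurableSet_monSet (A : ι → ℝ) : MeasurableSet (monSet A) := by
  simp only [monSet, Set.ofPred_forall]
  exact .iInter fun i => .iInter fun _ => measurableSet_lt measurable_const (by fun_prop)

theorem measurable_monWeight (A : ι → ℝ) : Measurable (monWeight A) := by
  unfold monWeight
  fun_prop

theorem monWeight_nonneg (A : ι → ℝ) (x : EuclideanSpace ℝ ι) : 0 ≤ monWeight A x :=
  Finset.prod_nonneg fun _ _ => by positivity

theorem monWeight_smul (A : ι → ℝ) {t : ℝ} (ht : 0 < t) (x : EuclideanSpace ℝ ι) :
    monWeight A (t • x) = t ^ (∑ i, A i) * monWeight A x := by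
  simp only [monWeight, rpow_sum_of_pos ht, ← Finset.prod_mul_distrib]
  refine Finset.prod_congr rfl fun i _ => ?_
  rw [PiLp.smul_apply, smul_eq_mul, abs_mul, abs_of_pos ht, mul_rpow ht.le (abs_nonneg _)]

theorem smul_mem_monSet_iff {t : ℝ} (ht : 0 < t) {x : EuclideanSpace ℝ ι} :
    t • x ∈ monSet A ↔ x ∈ monSet A := by
  simp [monSet, ht]

theorem monDim_pos [Nonempty ι] (hA : ∀ i, -1 < A i) : 0 < monDim A := by
  have h : ∑ _i : ι, (-1 : ℝ) < ∑ i, A i :=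
    Finset.sum_lt_sum_of_nonempty Finset.univ_nonempty fun i _ => hA i
  simp only [Finset.sum_const, Finset.card_univ, nsmul_eq_mul] at h
  rw [monDim]
  linarith

/-- The weighted measure `x^A dx` on `ℝ^n_A`. -/
def monMeasure (A : ι → ℝ) : Measure (EuclideanSpace ℝ ι) :=
  (volume.restrict (monSet A)).withDensity fun x => ENNReal.ofReal (monWeight A x)

theorem integral_monMeasure (A : ι → ℝ) (F : EuclideanSpace ℝ ι → ℝ) :
    ∫ x, F x ∂monMeasure A = ∫ x in monSet A, F x * monWeight A x := by
  rw [monMeasure, integral_withDensity_eq_integral_toReal_smul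
    (measurable_monWeight A).ennreal_ofReal (by simp)]
  simp only [ENNReal.toReal_ofReal (monWeight_nonneg A _), smul_eq_mul, mul_comm]

theorem integrable_monMeasure_iff {F : EuclideanSpace ℝ ι → ℝ} :
    Integrable F (monMeasure A) ↔ IntegrableOn (fun x => F x * monWeight A x) (monSet A) := by
  rw [monMeasure, integrable_withDensity_iff (measurable_monWeight A).ennreal_ofReal (by simp)]
  simp only [ENNReal.toReal_ofReal (monWeight_nonneg A _), IntegrableOn]

theorem monMeasure_ball (A : ι → ℝ) {t : ℝ} (ht : 0 < t) :
    monMeasure A (Metric.ball 0 t) =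
      ENNReal.ofReal (t ^ monDim A) * monMeasure A (Metric.ball 0 1) := by
  set w := (monSet A).indicator fun x => ENNReal.ofReal (monWeight A x)
  have hw : Measurable w :=
    (measurable_monWeight A).ennreal_ofReal.indicator (measurableSet_monSet A)
  have hwt (x : EuclideanSpace ℝ ι) : w (t • x) = ENNReal.ofReal (t ^ ∑ i, A i) * w x := by
    by_cases hx : x ∈ monSet A <;>
      simp [w, hx, smul_mem_monSet_iff ht, monWeight_smul A ht,
        ENNReal.ofReal_mul (rpow_nonneg ht.le _)]
  rw [monMeasure, ← withDensity_indicator (measurableSet_monSet A), ← smul_unitBall_of_pos ht,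
    withDensity_smul_set_of_homogeneous volume hw ht hwt Metric.isOpen_ball.measurableSet,
    finrank_euclideanSpace, ← ENNReal.ofReal_mul (by positivity), ← rpow_natCast, ← rpow_add ht,
    monDim]

theorem integral_abs_rpow_mul_exp_neg_sq {a : ℝ} (ha : -1 < a) :
    ∫ t in {t : ℝ | 0 < a → 0 < t}, |t| ^ a * exp (-t ^ 2) =
      Gamma ((a + 1) / 2) / (if 0 < a then 2 else 1) := by
  have hhalf : ∫ t in Set.Ioi (0 : ℝ), t ^ a * exp (-t ^ 2) = Gamma ((a + 1) / 2) / 2 := by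
    rw [← one_div_mul_eq_div, ← integral_rpow_mul_exp_neg_rpow two_pos ha]
    simp only [rpow_two]
  by_cases h : 0 < a
  · simp only [h, forall_const, if_true]
    rw [← hhalf]
    exact setIntegral_congr_fun measurableSet_Ioi fun t (ht : 0 < t) => by
      simp only [abs_of_pos ht]
  · simp only [h, false_imp_iff, Set.ofPred_true, Measure.restrict_univ, if_false, div_one]
    have heven := integral_comp_abs (f := fun t => t ^ a * exp (-t ^ 2))
    simp only [sq_abs] at heven
    rw [heven, hhalf, mul_div_cancel₀ _ two_ne_zero]

theorem integral_exp_neg_norm_sq_monMeasure (hA : ∀ i, -1 < A i) :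
    ∫ x, exp (-‖x‖ ^ 2) ∂monMeasure A = (∏ i, Gamma ((A i + 1) / 2)) / 2 ^ monK A := by
  set S : ι → Set ℝ := fun i => {t | 0 < A i → 0 < t}
  have hpre : monSet A = (MeasurableEquiv.toLp 2 (ι → ℝ)).symm ⁻¹' Set.univ.pi S := by
    ext; simp [monSet, S]
  have hprod (x : EuclideanSpace ℝ ι) :
      exp (-‖x‖ ^ 2) * monWeight A x = ∏ i, |x i| ^ A i * exp (-x i ^ 2) := by
    rw [Finset.prod_mul_distrib, ← exp_sum, Finset.sum_neg_distrib,
      ← EuclideanSpace.real_norm_sq_eq, mul_comm, monWeight]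
  have hcard : ∏ i, (if 0 < A i then (2 : ℝ) else 1) = 2 ^ monK A := by
    rw [Finset.prod_ite, Finset.prod_const, Finset.prod_const_one, mul_one, monK,
      Nat.card_eq_fintype_card, Fintype.card_subtype]
  calc ∫ x, exp (-‖x‖ ^ 2) ∂monMeasure A
      = ∫ x in monSet A, ∏ i, |x i| ^ A i * exp (-x i ^ 2) := by
        simp only [integral_monMeasure, hprod]
    _ = ∫ y in Set.univ.pi S, ∏ i, |y i| ^ A i * exp (-y i ^ 2) := by
        have hvol := EuclideanSpace.volume_preserving_symm_measurableEquiv_toLp ι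
        rw [hpre]
        exact hvol.setIntegral_preimage_emb (MeasurableEquiv.measurableEmbedding _)
          (fun y => ∏ i, |y i| ^ A i * exp (-y i ^ 2)) _
    _ = ∏ i, ∫ t in S i, |t| ^ A i * exp (-t ^ 2) := by
        rw [volume_pi, Measure.restrict_pi_pi]
        exact integral_fintype_prod_eq_prod fun i t => |t| ^ A i * exp (-t ^ 2)
    _ = _ := by
        simp only [S, integral_abs_rpow_mul_exp_neg_sq (hA _)]
        rw [Finset.prod_div_distrib, hcard]

theorem prod_Gamma_div_two_pow_monK_pos (hA : ∀ i, -1 < A i) :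
    0 < (∏ i, Gamma ((A i + 1) / 2)) / 2 ^ monK A :=
  div_pos (Finset.prod_pos fun i _ => Gamma_pos_of_pos (by linarith [hA i])) (by positivity)

theorem hasHomogeneousBalls_monMeasure (hA : ∀ i, -1 < A i) :
    HasHomogeneousBalls (monMeasure A) (monDim A) where
  unitBall_ne_top := by
    have hint : Integrable (fun x => exp (-‖x‖ ^ 2)) (monMeasure A) := .of_integral_ne_zero
      (integral_exp_neg_norm_sq_monMeasure hA ▸ (prod_Gamma_div_two_pow_monK_pos hA).ne')
    refine ((measure_mono fun x hx => ?_).trans_lt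
      (hint.measure_ge_lt_top (exp_pos (-1)))).ne
    have hx : ‖x‖ < 1 := mem_ball_zero_iff.1 hx
    simpa only [Set.mem_ofPred_eq, exp_le_exp, neg_le_neg_iff] using
      pow_le_one₀ (norm_nonneg x) hx.le
  measure_ball _ ht := monMeasure_ball A ht

theorem monMeasure_real_unitBall [Nonempty ι] (hA : ∀ i, -1 < A i) :
    (monMeasure A).real (Metric.ball 0 1) =
      (∏ i, Gamma ((A i + 1) / 2)) / 2 ^ monK A / Gamma (monDim A / 2 + 1) := by
  have hD := monDim_pos hA
  have hgauss := (hasHomogeneousBalls_monMeasure hA).integral_exp_neg_mul_norm_rpow hD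
    two_pos one_pos
  simp only [rpow_two, one_mul, one_rpow, integral_exp_neg_norm_sq_monMeasure hA] at hgauss
  rw [hgauss, mul_div_cancel_left₀ _ (Gamma_pos_of_pos (by positivity)).ne']

theorem monCA_eq_rpow_monMeasure_unitBall [Nonempty ι] (hA : ∀ i, -1 < A i) (α : ℝ) :
    monCA A α =
      (Gamma (monDim A / α + 1) * (monMeasure A).real (Metric.ball 0 1)) ^ (α / monDim A) := by
  have hpi : monPi A ^ (monDim A / 2) = (∏ i, Gamma ((A i + 1) / 2)) / 2 ^ monK A := by
    rw [monPi, ← rpow_mul (prod_Gamma_div_two_pow_monK_pos hA).le,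
      div_mul_div_cancel₀' two_ne_zero, div_self (monDim_pos hA).ne', rpow_one]
  rw [monCA, hpi, monMeasure_real_unitBall hA, div_mul_comm, mul_comm]

end MonomialMeasure

theorem shannon_monomial_weight_general {ι : Type*} [Fintype ι] [Nonempty ι] {A : ι → ℝ}
    (hA : ∀ i, -1 < A i) {α : ℝ} (hα : 0 < α) {f : EuclideanSpace ℝ ι → ℝ}
    (hnorm : ∫ x in monSet A, |f x| * monWeight A x = 1)
    (hmom : IntegrableOn (fun x => |f x| * ‖x‖ ^ α * monWeight A x) (monSet A))
    (hent : IntegrableOn (fun x => |f x| * log |f x| * monWeight A x) (monSet A)) :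
    -∫ x in monSet A, |f x| * log |f x| * monWeight A x ≤
      monDim A / α *
        log (α * monCA A α * exp 1 / monDim A *
          ∫ x in monSet A, |f x| * ‖x‖ ^ α * monWeight A x) := by
  rw [monCA_eq_rpow_monMeasure_unitBall hA]
  simp only [← integral_monMeasure, ← integrable_monMeasure_iff] at hnorm hmom hent ⊢
  exact (hasHomogeneousBalls_monMeasure hA).neg_integral_mul_log_self_le (monDim_pos hA) hα
    (fun x => abs_nonneg (f x)) hnorm hmom hent

/-- the Shannon type inequality with monomial weights.
(Recall `Real.log 0 = 0`, so `|f| log |f|` vanishes where `f = 0`.) -/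
theorem shannon_monomial_weight {n : ℕ} (hn : 0 < n) (A : Fin n → ℝ) (hA : ∀ i, 0 ≤ A i)
    (α : ℝ) (hα : 0 < α)
    (f : EuclideanSpace ℝ (Fin n) → ℝ) (hf : Measurable f)
    (hnorm : ∫ x in monSet A, |f x| * monWeight A x = 1)
    (hmom : IntegrableOn (fun x => |f x| * ‖x‖ ^ α * monWeight A x) (monSet A))
    (hent : IntegrableOn (fun x => |f x| * log |f x| * monWeight A x) (monSet A)) :
    -∫ x in monSet A, |f x| * log |f x| * monWeight A x ≤
      monDim A / α *
        log (α * monCA A α * exp 1 / monDim A *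
          ∫ x in monSet A, |f x| * ‖x‖ ^ α * monWeight A x) := by
  have : Nonempty (Fin n) := ⟨⟨0, hn⟩⟩
  exact shannon_monomial_weight_general (fun i => neg_one_lt_zero.trans_le (hA i)) hα
    hnorm hmom hent
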